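/- Existence principle (Theorem 2.1): Assume (h1) and (h2). Assume moreover (h3⁰): whenever u ∈ Ū, λ ∈ (0,1) and u(t) = λ·N(u)(t) for all t ∈ [0,a], then ‖u(t)‖ < R(t) for all t ∈ [0,a]; and (h4⁰): for every countable set C ⊆ Ū with C ⊆ closure(convexHull({0} ∪ N(C))) taken in C([0,a];X), the closure of C is compact in C([0,a];X). Then N has a fixed point in Ū, i.e. the nonlocal problem has a mild solution in Ū. -/

import Mathlib

open MeasureTheory

/-- The set `Ū` of continuous functions `u : [0,a] → X` with `‖u t‖ ≤ R t` for all `t`. -/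
def UbarSet {X : Type*} [NormedAddCommGroup X] (a : ℝ) (R : ℝ → ℝ) :
    Set C(Set.Icc (0:ℝ) a, X) :=
  {u | ∀ t : Set.Icc (0:ℝ) a, ‖u t‖ ≤ R t}

/-!
Composing `N` with the radial retraction onto `Ū` gives a self-map of `Ū`, and the boundary
condition turns its fixed points into fixed points of `N`. A self-map with the countable
compactness property has a fixed point by Mönch's argument: the smallest convex set which contains
`0` and is stable under the map is a countable union of separable sets, so it has a countable dense
subset, to which the compactness hypothesis applies; its closure is therefore a compact convex
stable set, and Schauder's theorem gives the fixed point.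

Schauder's theorem follows from Brouwer's theorem on the simplex by means of a partition of unity.
For Brouwer's theorem, the Knaster–Kuratowski–Mazurkiewicz type covering statement is derived from
Scarf's dominating sets in place of triangulations: for a finite set with several linear orders
they form a simplicial complex for which Sperner's door counting works.
-/

open Filter Finset Topology

section Sperner

variable {V I : Type*}

open Classical in
lemma card_filter_image_erase_eq {f : V → I} {S : Finset V} (h : #(S.image f) + 1 = #S) :
    #{v ∈ S | (S.erase v).image f = S.image f} = 2 := by
  obtain ⟨a, ha, b, hb, hab, hf⟩ : ∃ a ∈ S, ∃ b ∈ S, a ≠ b ∧ f a = f b :=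
    exists_ne_map_eq_of_card_lt_of_maps_to (t := S.image f) (by omega)
      fun x hx => mem_image_of_mem f hx
  have image_erase_eq : ∀ v ∈ S, ∀ w ∈ S, w ≠ v → f w = f v →
      (S.erase v).image f = S.image f := by
    intro v hv w hw hwv hfw
    rw [← insert_erase hv, erase_insert (notMem_erase v S), image_insert, ← hfw,
      insert_eq_self.2 (mem_image_of_mem f (mem_erase.2 ⟨hwv, hw⟩))]
  have injOn_erase : ∀ v ∈ S, (S.erase v).image f = S.image f → Set.InjOn f (S.erase v) := by
    intro v hv hi
    apply injOn_of_card_image_eq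
    rw [hi, card_erase_of_mem hv]
    omega
  have heq : {v ∈ S | (S.erase v).image f = S.image f} = {a, b} := by
    ext v
    simp only [mem_filter, mem_insert, mem_singleton]
    constructor
    · rintro ⟨hv, hi⟩
      by_contra! hne
      exact hab (injOn_erase v hv hi (mem_erase.2 ⟨hne.1.symm, ha⟩)
        (mem_erase.2 ⟨hne.2.symm, hb⟩) hf)
    · rintro (rfl | rfl)
      · exact ⟨ha, image_erase_eq _ ha _ hb hab.symm hf.symm⟩
      · exact ⟨hb, image_erase_eq _ hb _ ha hab hf⟩
  rw [heq, card_pair hab]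

variable [Fintype I]

open Classical in
/-- A door of the simplicial complex with faces `P`, for the colouring `κ` of its vertices: a face
with one vertex of each colour other than `i₀`. -/
def IsDoor (P : Finset V → Prop) (κ : V → I) (i₀ : I) (S : Finset V) : Prop :=
  P S ∧ S.image κ = univ.erase i₀ ∧ #S + 1 = Fintype.card I

open Classical in
lemma even_card_isDoor_erase {P : Finset V → Prop} (hP : ∀ S R, S ⊆ R → P R → P S) {κ : V → I}
    {i₀ : I} {R : Finset V} (hPR : P R) (hR : R.image κ ≠ univ) :
    Even #{v ∈ R | IsDoor P κ i₀ (R.erase v)} := by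
  obtain hempty | ⟨w, hw⟩ := ({v ∈ R | IsDoor P κ i₀ (R.erase v)}).eq_empty_or_nonempty
  · simp [hempty]
  obtain ⟨hwR, -, hwκ, hwcard⟩ := mem_filter.1 hw
  have hcard : #R = Fintype.card I := by rw [← hwcard, card_erase_add_one hwR]
  have himage : R.image κ = univ.erase i₀ := by
    have hsub : univ.erase i₀ ⊆ R.image κ := hwκ ▸ image_subset_image (erase_subset w R)
    refine (subset_erase.2 ⟨subset_univ _, fun hi₀ => hR ?_⟩).antisymm hsub
    rw [← insert_eq_self.2 hi₀]
    exact univ_subset_iff.1 ((insert_erase (mem_univ i₀)).symm.subset.trans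
      (insert_subset_insert _ hsub))
  have hdoor : {v ∈ R | IsDoor P κ i₀ (R.erase v)} =
      {v ∈ R | (R.erase v).image κ = R.image κ} := by
    refine filter_congr fun v hv => ?_
    rw [himage]
    exact ⟨fun h => h.2.1, fun h => ⟨hP _ _ (erase_subset v R) hPR, h,
      by rw [card_erase_add_one hv, hcard]⟩⟩
  have himage_card : #(R.image κ) + 1 = #R := by
    rw [himage, card_erase_add_one (mem_univ i₀), card_univ, hcard]
  rw [hdoor, card_filter_image_erase_eq himage_card]
  exact even_two

open Classical in
lemma sum_card_insert_eq_sum_card_erase [Fintype V] (P Q : Finset V → Prop) :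
    ∑ S with Q S, #{v | v ∉ S ∧ P (insert v S)} = ∑ R with P R, #{v ∈ R | Q (R.erase v)} := by
  simp_rw [← card_sigma]
  refine card_nbij' (fun x => ⟨insert x.2 x.1, x.2⟩) (fun x => ⟨x.1.erase x.2, x.2⟩) ?_ ?_ ?_ ?_
  all_goals
    rintro ⟨S, v⟩ h
    simp only [coe_sigma, Set.mem_sigma_iff, mem_coe, mem_filter, mem_univ, true_and] at h
    simp [h]

open Classical in
/-- Double counting of the incidences between doors and rooms: were no room to show all colours,
each would have an even number of doors. -/
lemma exists_image_eq_univ_of_odd [Fintype V] {P : Finset V → Prop}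
    (hP : ∀ S R, S ⊆ R → P R → P S) {κ : V → I} {i₀ : I}
    (hodd : Odd (∑ S with IsDoor P κ i₀ S, #{v | v ∉ S ∧ P (insert v S)})) :
    ∃ R, P R ∧ R.image κ = univ := by
  by_contra! hR
  rw [sum_card_insert_eq_sum_card_erase, ← Nat.not_even_iff_odd] at hodd
  exact hodd (even_sum _ fun R hPR =>
    even_card_isDoor_erase hP (mem_filter.1 hPR).2 (hR R (mem_filter.1 hPR).2))

end Sperner

section Dominating

variable {V I L : Type*} [LinearOrder L] {ρ : I → V → L} {S : Finset V} {s : I → V}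

/-- In the `i`-th of the orders of `V` given by `ρ`, the vertex `v` lies weakly below all
of `S`. -/
def IsBelow (ρ : I → V → L) (S : Finset V) (i : I) (v : V) : Prop :=
  ∀ z ∈ S, ρ i v ≤ ρ i z

/-- Scarf's dominating sets: no vertex lies above some element of `S` in each of the orders. They
are the faces of the complex which replaces a triangulation of the simplex. -/
def IsDominating (ρ : I → V → L) (S : Finset V) : Prop :=
  ∀ v, ∃ i, IsBelow ρ S i v

/-- `s i` is a slack vertex for the `i`-th order: the least one there, and above all vertices that
are not slack in each other order. The slack vertices stand for the corners of the simplex. -/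
structure IsSlack (ρ : I → V → L) (s : I → V) : Prop where
  le : ∀ i v, ρ i (s i) ≤ ρ i v
  lt : ∀ {i j v}, i ≠ j → v ∉ Set.range s → ρ i v < ρ i (s j)

lemma IsDominating.mono {R : Finset V} (hSR : S ⊆ R) (hR : IsDominating ρ R) :
    IsDominating ρ S := fun v =>
  (hR v).imp fun _ hi z hz => hi z (hSR hz)

open Classical in
/-- The new vertex is the largest one, in the `k`-th order, among those which lie below `S` in no
other order. -/
lemma exists_unique_insert_isDominating [Finite V] (hρ : ∀ i, (ρ i).Injective)
    (hdom : IsDominating ρ S) {k : I} (hk : ∀ d ∈ S, ∃ l ≠ k, IsBelow ρ S l d)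
    (hne : ∃ v, ∀ l, IsBelow ρ S l v → l = k) :
    ∃ x ∉ S, (∀ l, IsBelow ρ S l x → l = k) ∧ IsDominating ρ (insert x S) ∧
      ∀ z, (∀ l, IsBelow ρ S l z → l = k) → IsDominating ρ (insert z S) → z = x := by
  obtain ⟨x, hx, hmax⟩ := ({v | ∀ l, IsBelow ρ S l v → l = k} : Set V).exists_max_image (ρ k)
    (Set.toFinite _) hne
  have below_insert : ∀ {l v z}, IsBelow ρ S l v → ρ l v ≤ ρ l z → IsBelow ρ (insert z S) l v :=
    fun hv hvz => forall_mem_insert _ _ _ |>.2 ⟨hvz, hv⟩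
  refine ⟨x, fun hxS => ?_, hx, fun v => ?_, fun z hz hzdom => ?_⟩
  · obtain ⟨l, hlk, hl⟩ := hk x hxS
    exact hlk (hx l hl)
  · by_cases hv : ∀ l, IsBelow ρ S l v → l = k
    · obtain ⟨l, hl⟩ := hdom v
      obtain rfl := hv l hl
      exact ⟨l, below_insert hl (hmax v hv)⟩
    · push Not at hv
      obtain ⟨l, hl, hlk⟩ := hv
      have hxl : ¬ IsBelow ρ S l x := fun h => hlk (hx l h)
      simp only [IsBelow, not_forall, not_le] at hxl
      obtain ⟨y, hy, hyx⟩ := hxl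
      exact ⟨l, below_insert hl ((hl y hy).trans hyx.le)⟩
  · obtain ⟨l, hl⟩ := hzdom x
    obtain rfl := hx l fun y hy => hl y (mem_insert_of_mem hy)
    exact hρ l ((hmax z hz).antisymm (hl z (mem_insert_self z S)))

variable [Fintype I]

open Classical in
lemma card_filter_forall_exists_ne_isBelow (hρ : ∀ i, (ρ i).Injective) (hS : S.Nonempty)
    (hdom : IsDominating ρ S) (hcard : #S + 1 = Fintype.card I) :
    #{k | ∀ d ∈ S, ∃ l ≠ k, IsBelow ρ S l d} = 2 := by
  choose μ hμS hμ using fun i => S.exists_min_image (ρ i) hS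
  have isBelow_iff : ∀ d ∈ S, ∀ l, IsBelow ρ S l d ↔ μ l = d := fun d hd l =>
    ⟨fun h => hρ l ((hμ l d hd).antisymm (h _ (hμS l))), fun h => h ▸ hμ l⟩
  have himage : univ.image μ = S := by
    refine (image_subset_iff.2 fun i _ => hμS i).antisymm fun d hd => ?_
    obtain ⟨i, hi⟩ := hdom d
    exact mem_image.2 ⟨i, mem_univ i, (isBelow_iff d hd i).1 hi⟩
  have himage_erase : ∀ k, (∀ d ∈ S, ∃ l ≠ k, IsBelow ρ S l d) ↔
      (univ.erase k).image μ = univ.image μ := by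
    intro k
    rw [himage, subset_antisymm_iff, and_iff_right (image_subset_iff.2 fun i _ => hμS i)]
    refine forall₂_congr fun d hd => ?_
    simp [isBelow_iff d hd]
  simp only [himage_erase]
  exact card_filter_image_erase_eq (by rw [himage, hcard, card_univ])

open Classical in
lemma exists_forall_isBelow_eq_of_insert (hρ : ∀ i, (ρ i).Injective)
    (hcard : #S + 1 = Fintype.card I) {z : V} (hz : z ∉ S) (hdom : IsDominating ρ (insert z S)) :
    ∃ k, (∀ l, IsBelow ρ S l z → l = k) ∧ ∀ d ∈ S, ∃ l ≠ k, IsBelow ρ S l d := by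
  choose lower hlower using hdom
  have hlower' : ∀ d, IsBelow ρ S (lower d) d := fun d y hy => hlower d y (mem_insert_of_mem hy)
  have not_isBelow : ∀ d ∈ S, ¬ IsBelow ρ S (lower d) z := fun d hd hzd =>
    hz (hρ _ ((hzd d hd).antisymm (hlower d z (mem_insert_self z S))) ▸ hd)
  have lower_ne : ∀ d ∈ S, lower d ≠ lower z := fun d hd h => not_isBelow d hd (h ▸ hlower' z)
  have injOn_lower : Set.InjOn lower S := fun d hd d' hd' h =>
    hρ _ ((hlower' d d' hd').antisymm (h ▸ hlower' d' d hd))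
  have surjOn_lower : Set.SurjOn lower S (univ.erase (lower z)) := by
    refine surjOn_of_injOn_of_card_le lower (fun d hd => ?_) injOn_lower ?_
    · exact mem_erase.2 ⟨lower_ne d hd, mem_univ _⟩
    · rw [card_erase_of_mem (mem_univ _), card_univ]
      omega
  refine ⟨lower z, fun l hl => ?_, fun d hd => ⟨lower d, lower_ne d hd, hlower' d⟩⟩
  by_contra hne
  obtain ⟨d, hd, rfl⟩ := surjOn_lower (mem_erase.2 ⟨hne, mem_univ l⟩)
  exact not_isBelow d hd hl

open Classical in
lemma IsDominating.card_insert_eq_two [Fintype V] (hρ : ∀ i, (ρ i).Injective)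
    (hs : IsSlack ρ s) (hdom : IsDominating ρ S) (hcard : #S + 1 = Fintype.card I)
    (hS : ∃ v ∈ S, v ∉ Set.range s) : #{z | z ∉ S ∧ IsDominating ρ (insert z S)} = 2 := by
  obtain ⟨v, hvS, hv⟩ := hS
  have slack_isBelow : ∀ k l, IsBelow ρ S l (s k) → l = k := fun k l hl => by
    by_contra hlk
    exact (hs.lt hlk hv).not_ge (hl v hvS)
  have : Nonempty V := ⟨v⟩
  choose! x hxS hx hxdom hxuniq using
    fun k (hk : ∀ d ∈ S, ∃ l ≠ k, IsBelow ρ S l d) =>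
      exists_unique_insert_isDominating hρ hdom hk ⟨s k, slack_isBelow k⟩
  rw [← card_filter_forall_exists_ne_isBelow hρ ⟨v, hvS⟩ hdom hcard]
  symm
  refine card_nbij x (fun k hk => ?_) (fun k hk k' hk' hxk => ?_) fun z hz => ?_
  · simp only [coe_filter, mem_univ, true_and, Set.mem_ofPred_eq] at hk
    exact mem_filter.2 ⟨mem_univ _, hxS k hk, hxdom k hk⟩
  · simp only [coe_filter, mem_univ, true_and, Set.mem_ofPred_eq] at hk
    simp only [coe_filter, mem_univ, true_and, Set.mem_ofPred_eq] at hk'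
    obtain ⟨l, hl⟩ := hdom (x k)
    exact (hx k hk l hl).symm.trans (hx k' hk' l (hxk ▸ hl))
  · obtain ⟨-, hzS, hzdom⟩ := mem_filter.1 hz
    obtain ⟨k, hkz, hk⟩ := exists_forall_isBelow_eq_of_insert hρ hcard hzS hzdom
    exact ⟨k, by simpa using hk, (hxuniq k hk z hkz hzdom).symm⟩

open Classical in
lemma IsSlack.isDominating_image (hs : IsSlack ρ s) (i₀ : I) :
    IsDominating ρ ((univ.erase i₀).image s) := by
  intro v
  by_cases hv : v ∈ Set.range s
  · obtain ⟨i, rfl⟩ := hv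
    exact ⟨i, fun z _ => hs.le i z⟩
  · refine ⟨i₀, forall_mem_image.2 fun j hj => (hs.lt (ne_of_mem_erase hj).symm hv).le⟩

open Classical in
lemma IsSlack.card_insert_eq_one [Fintype V] (hρ : ∀ i, (ρ i).Injective) (hs : IsSlack ρ s)
    (hne : ∃ v, v ∉ Set.range s) (i₀ : I) :
    #{z | z ∉ (univ.erase i₀).image s ∧
      IsDominating ρ (insert z ((univ.erase i₀).image s))} = 1 := by
  obtain ⟨x, hx, hmax⟩ := ((Set.range s)ᶜ).exists_max_image (ρ i₀) (Set.toFinite _) hne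
  refine card_eq_one.2 ⟨x, ?_⟩
  ext z
  simp only [mem_filter, mem_univ, true_and, mem_singleton]
  constructor
  · rintro ⟨hz, hdom⟩
    obtain ⟨l, hl⟩ := hdom x
    have lt_slack : ∀ y, ρ l x ≤ ρ l y → y ≠ s l := by
      rintro _ hxy rfl
      exact hx ⟨l, hρ l ((hs.le l x).antisymm hxy)⟩
    obtain rfl : l = i₀ := by
      by_contra hli₀
      have hl' := mem_image_of_mem s (mem_erase.2 ⟨hli₀, mem_univ l⟩)
      exact lt_slack _ (hl _ (mem_insert_of_mem hl')) rfl
    have hxz := hl z (mem_insert_self z _)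
    have hzs : z ∉ Set.range s := by
      rintro ⟨j, rfl⟩
      have hjl : j ≠ l := fun h => lt_slack _ hxz (h ▸ rfl)
      exact hz (mem_image_of_mem s (mem_erase.2 ⟨hjl, mem_univ j⟩))
    exact hρ l ((hmax z hzs).antisymm hxz)
  · rintro rfl
    refine ⟨fun hz => hx ?_, fun v => ?_⟩
    · obtain ⟨j, -, hj⟩ := mem_image.1 hz
      exact ⟨j, hj⟩
    · by_cases hv : v ∈ Set.range s
      · obtain ⟨i, rfl⟩ := hv
        exact ⟨i, fun y _ => hs.le i y⟩
      · exact ⟨i₀, forall_mem_insert _ _ _ |>.2 ⟨hmax v hv, forall_mem_image.2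
          fun j hj => (hs.lt (ne_of_mem_erase hj).symm hv).le⟩⟩

open Classical in
/-- Scarf's version of Sperner's lemma. -/
theorem exists_isDominating_image_eq_univ [Finite V] [Nonempty I] (hρ : ∀ i, (ρ i).Injective)
    (hs : IsSlack ρ s) (hne : ∃ v, v ∉ Set.range s) {κ : V → I} (hκ : ∀ i, κ (s i) = i) :
    ∃ S, IsDominating ρ S ∧ S.image κ = univ := by
  have := Fintype.ofFinite V
  obtain ⟨i₀⟩ := ‹Nonempty I›
  set S₀ := (univ.erase i₀).image s with hS₀
  have hdoor₀ : IsDoor (IsDominating ρ) κ i₀ S₀ := by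
    refine ⟨hs.isDominating_image i₀, ?_, ?_⟩
    · rw [hS₀, image_image, show κ ∘ s = id from funext hκ, image_id]
    · rw [hS₀, card_image_of_injective _ (Function.LeftInverse.injective hκ),
        card_erase_add_one (mem_univ i₀), card_univ]
  refine exists_image_eq_univ_of_odd (i₀ := i₀) (fun S R hSR => IsDominating.mono hSR) ?_
  rw [← add_sum_erase _ _ (mem_filter.2 ⟨mem_univ S₀, hdoor₀⟩),
    hs.card_insert_eq_one hρ hne i₀, add_comm]
  refine Even.add_one (even_sum _ fun S hS => ?_)
  obtain ⟨hSne, hS⟩ := mem_erase.1 hS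
  obtain ⟨hdom, hSκ, hcard⟩ := (mem_filter.1 hS).2
  have exists_not_slack : ∃ v ∈ S, v ∉ Set.range s := by
    by_contra! hslack
    refine hSne ?_
    rw [hS₀, ← hSκ, image_image]
    refine (image_id.symm.trans (image_congr fun v hv => ?_))
    obtain ⟨i, rfl⟩ := hslack v hv
    simp [hκ]
  rw [hdom.card_insert_eq_two hρ hs hcard exists_not_slack]
  exact even_two

end Dominating

section Colouring

variable {ι I L : Type*} [Finite ι] [Nonempty ι] [Finite I] [Nonempty I] [LinearOrder L]

open Classical in
/-- Scarf's lemma, applied to `ι` with one slack vertex added for each colour. -/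
theorem exists_finset_forall_exists_forall_le (p : ι → I → L) (c : ι → I) :
    ∃ (D : Finset ι) (C : Finset I), (∀ i ∈ C, ∃ d ∈ D, c d = i) ∧
      ∀ t, ∃ i ∈ C, ∀ d ∈ D, p t i ≤ p d i := by
  have := Fintype.ofFinite ι
  have := Fintype.ofFinite I
  let height (i : I) : ι ⊕ I → WithBot (WithTop L) :=
    Sum.elim (fun t => ((p t i : WithTop L) : WithBot (WithTop L)))
      fun j => if j = i then ⊥ else ⊤
  let ρ (i : I) (v : ι ⊕ I) : WithBot (WithTop L) ×ₗ Fin (Fintype.card (ι ⊕ I)) :=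
    toLex (height i v, Fintype.equivFin _ v)
  have hρ : ∀ i, (ρ i).Injective := fun i v w h =>
    (Fintype.equivFin _).injective (congrArg (fun x => (ofLex x).2) h)
  have height_lt : ∀ {i v}, v ≠ Sum.inr i → ⊥ < height i v := by
    rintro i (t | j) hv
    · simp [height]
    · simp [height, show j ≠ i from fun h => hv (h ▸ rfl)]
  have hs : IsSlack ρ (Sum.inr : I → ι ⊕ I) := by
    constructor
    · intro i v
      obtain rfl | hv := eq_or_ne v (Sum.inr i)
      · exact le_rfl
      · exact (Prod.Lex.toLex_lt_toLex.2 (.inl (by simpa [height] using height_lt hv))).le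
    · rintro i j (t | k) hij hv
      · refine Prod.Lex.toLex_lt_toLex.2 (.inl ?_)
        simpa [height, hij.symm] using WithBot.coe_lt_coe.2 (WithTop.coe_lt_top (p t i))
      · exact absurd ⟨k, rfl⟩ hv
  obtain ⟨S, hdom, hS⟩ := exists_isDominating_image_eq_univ hρ hs
    ⟨Sum.inl (Classical.arbitrary ι), by simp⟩ (κ := Sum.elim c id) fun _ => rfl
  refine ⟨S.toLeft, S.toRightᶜ, fun i hi => ?_, fun t => ?_⟩
  · obtain ⟨t | j, hv, rfl⟩ := mem_image.1 (hS ▸ mem_univ i)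
    · exact ⟨t, mem_toLeft.2 hv, rfl⟩
    · exact absurd (mem_toRight.2 hv) (mem_compl.1 hi)
  · obtain ⟨i, hi⟩ := hdom (Sum.inl t)
    refine ⟨i, mem_compl.2 fun h => ?_, fun d hd => ?_⟩
    · exact absurd (hi _ (mem_toRight.1 h)) (not_le.2 (Prod.Lex.toLex_lt_toLex.2
        (.inl (by simp [height]))))
    · have := Prod.Lex.monotone_fst _ _ (hi _ (mem_toLeft.1 hd))
      simpa [ρ, height] using this

end Colouring

section Brouwer

variable {I : Type*} [Fintype I]

lemma exists_finset_forall_exists_forall_lt [Nonempty I] {σ : ℝ} (hσ : 0 < σ) :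
    ∃ t : Finset (I → ℝ), t.Nonempty ∧ (t : Set (I → ℝ)) ⊆ stdSimplex ℝ I ∧
      ∀ m : I → ℝ, (∀ i, 0 ≤ m i) → ∑ i, m i + σ ≤ 1 → ∃ x ∈ t, ∀ i, m i < x i := by
  have hn : (0 : ℝ) < Fintype.card I := by exact_mod_cast Fintype.card_pos
  obtain ⟨t, ht, htfin, hcover⟩ :=
    (isCompact_stdSimplex ℝ I).finite_cover_balls (div_pos hσ hn)
  lift t to Finset (I → ℝ) using htfin
  have ht_nonempty : t.Nonempty := by
    classical
    exact (Set.mem_iUnion₂.1 (hcover (single_mem_stdSimplex ℝ (Classical.arbitrary I)))).imp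
      fun _ h => h.1
  refine ⟨t, ht_nonempty, ht, fun m hm hmσ => ?_⟩
  let slack := (1 - ∑ i, m i) / Fintype.card I
  have hslack : σ / Fintype.card I ≤ slack := by
    exact div_le_div_of_nonneg_right (by linarith) hn.le
  have hy : (fun i => m i + slack) ∈ stdSimplex ℝ I := by
    refine ⟨fun i => add_nonneg (hm i) ((div_pos hσ hn).le.trans hslack), ?_⟩
    simp [sum_add_distrib, slack, mul_div_cancel₀ _ hn.ne']
  obtain ⟨x, hx, hyx⟩ := Set.mem_iUnion₂.1 (hcover hy)
  refine ⟨x, hx, fun i => ?_⟩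
  have hi := (abs_lt.1 ((dist_le_pi_dist _ x i).trans_lt hyx)).2
  linarith

lemma dist_le_sum_sub_of_le {x y : I → ℝ} (h : x ≤ y) : dist y x ≤ ∑ i, (y i - x i) := by
  have hnonneg : ∀ i, 0 ≤ y i - x i := fun i => sub_nonneg.2 (h i)
  refine (dist_pi_le_iff (sum_nonneg fun i _ => hnonneg i)).2 fun i => ?_
  rw [Real.dist_eq, abs_of_nonneg (hnonneg i)]
  exact single_le_sum (fun i _ => hnonneg i) (mem_univ i)

open Classical in
/-- `m` is the lower envelope on `C` of the dominating set `D`: as `m` is not strictly below any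
point of the net, its sum is nearly `1`, so that all of `D` is close to `m`. -/
lemma exists_mem_stdSimplex_forall_lt_or_mem_thickening [Nonempty I] {F : I → Set (I → ℝ)}
    (hF : stdSimplex ℝ I ⊆ ⋃ i, F i) {ε : ℝ} (hε : 0 < ε) :
    ∃ x ∈ stdSimplex ℝ I, ∀ i, x i < ε ∨ x ∈ Metric.thickening ε (F i) := by
  obtain ⟨t, ht_nonempty, ht, ht_net⟩ :=
    exists_finset_forall_exists_forall_lt (I := I) (half_pos hε)
  have := ht_nonempty.to_subtype
  choose c hc using fun x : t => Set.mem_iUnion.1 (hF (ht x.2))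
  obtain ⟨D, C, hCD, hdom⟩ := exists_finset_forall_exists_forall_le (fun (x : t) i => x.1 i) c
  obtain ⟨i₀, hi₀, -⟩ := hdom (Classical.arbitrary t)
  obtain ⟨d₀, hd₀, -⟩ := hCD i₀ hi₀
  let m (i : I) : ℝ := if i ∈ C then D.inf' ⟨d₀, hd₀⟩ (fun d => d.1 i) else 0
  have hm_nonneg : ∀ i, 0 ≤ m i := fun i => by
    by_cases hi : i ∈ C
    · simpa only [m, hi, if_true] using le_inf' _ _ fun d _ => (ht d.2).1 i
    · simp [m, hi]
  have hm_le : ∀ d ∈ D, m ≤ d.1 := fun d hd i => by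
    by_cases hi : i ∈ C
    · simpa only [m, hi, if_true] using inf'_le (fun d : t => d.1 i) hd
    · simpa [m, hi] using (ht d.2).1 i
  have hm_sum : 1 < ∑ i, m i + ε / 2 := by
    by_contra! hle
    obtain ⟨x, hx, hmx⟩ := ht_net m hm_nonneg hle
    obtain ⟨i, hi, hxd⟩ := hdom ⟨x, hx⟩
    refine (hmx i).not_ge ?_
    simpa only [m, hi, if_true] using le_inf' _ _ hxd
  have dist_lt : ∀ d ∈ D, dist d.1 m < ε / 2 := fun d hd => by
    refine (dist_le_sum_sub_of_le (hm_le d hd)).trans_lt ?_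
    rw [sum_sub_distrib, (ht d.2).2]
    linarith
  refine ⟨d₀, ht d₀.2, fun i => ?_⟩
  by_cases hi : i ∈ C
  · obtain ⟨d, hd, rfl⟩ := hCD i hi
    exact .inr (Metric.mem_thickening_iff.2 ⟨d, hc d,
      (dist_triangle_right _ _ m).trans_lt (by linarith [dist_lt d hd, dist_lt d₀ hd₀])⟩)
  · have := (le_abs_self _).trans_lt ((dist_le_pi_dist d₀.1 m i).trans_lt (dist_lt d₀ hd₀))
    simp only [m, hi, if_false, sub_zero] at this
    exact .inl (by linarith)

lemma exists_mem_stdSimplex_forall_eq_zero_or_mem [Nonempty I] {F : I → Set (I → ℝ)}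
    (hFc : ∀ i, IsClosed (F i)) (hF : stdSimplex ℝ I ⊆ ⋃ i, F i) :
    ∃ x ∈ stdSimplex ℝ I, ∀ i, x i = 0 ∨ x ∈ F i := by
  obtain ⟨δ, -, hδ, hδ0⟩ := exists_seq_strictAnti_tendsto (0 : ℝ)
  choose x hx hxδ using fun n => exists_mem_stdSimplex_forall_lt_or_mem_thickening hF (hδ n)
  obtain ⟨y, hy, φ, hφ, hxy⟩ := (isCompact_stdSimplex ℝ I).tendsto_subseq hx
  have hδφ := hδ0.comp hφ.tendsto_atTop
  refine ⟨y, hy, fun i => ?_⟩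
  have hfreq : ∃ᶠ n in atTop,
      x (φ n) i < δ (φ n) ∨ x (φ n) ∈ Metric.thickening (δ (φ n)) (F i) :=
    Frequently.of_forall fun n => hxδ (φ n) i
  obtain hlt | hmem := frequently_or_distrib.1 hfreq
  · exact .inl ((le_of_tendsto_of_tendsto_of_frequently (tendsto_pi_nhds.1 hxy i) hδφ
      (hlt.mono fun _ => le_of_lt)).antisymm (hy.1 i))
  · have hdist : Metric.infEDist y (F i) ≤ ENNReal.ofReal 0 :=
      le_of_tendsto_of_tendsto_of_frequently
        ((Metric.continuous_infEDist.tendsto y).comp hxy) (ENNReal.tendsto_ofReal hδφ)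
        (hmem.mono fun _ h => (Metric.mem_thickening_iff_infEDist_lt.1 h).le)
    exact .inr ((Metric.mem_iff_infEDist_zero_of_closed (hFc i)).2 (by simpa using hdist))

/-- **Brouwer's fixed point theorem** on the standard simplex. -/
theorem exists_mem_stdSimplex_eq [Nonempty I] {f : (I → ℝ) → I → ℝ}
    (hf : ContinuousOn f (stdSimplex ℝ I))
    (hmaps : Set.MapsTo f (stdSimplex ℝ I) (stdSimplex ℝ I)) :
    ∃ x ∈ stdSimplex ℝ I, f x = x := by
  have hclosed := isClosed_stdSimplex ℝ I
  have hcover : stdSimplex ℝ I ⊆ ⋃ i, {x ∈ stdSimplex ℝ I | x i ≤ f x i} := fun x hx => by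
    obtain ⟨i, -, hi⟩ : ∃ i ∈ univ, x i ≤ f x i :=
      exists_le_of_sum_le univ_nonempty (by rw [hx.2, (hmaps hx).2])
    exact Set.mem_iUnion.2 ⟨i, hx, hi⟩
  obtain ⟨x, hx, hxf⟩ := exists_mem_stdSimplex_forall_eq_zero_or_mem
    (fun i => hclosed.isClosed_le (continuous_apply i).continuousOn (continuousOn_pi.1 hf i))
    hcover
  have hle : ∀ i ∈ univ, x i ≤ f x i := fun i _ =>
    (hxf i).elim (fun h => h ▸ (hmaps hx).1 i) And.right
  refine ⟨x, hx, funext fun i => ?_⟩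
  exact (((sum_eq_sum_iff_of_le hle).1 (by rw [hx.2, (hmaps hx).2])) i (mem_univ i)).symm

end Brouwer

section FixedPoint

lemma exists_eq_of_forall_exists_dist_lt {E : Type*} [MetricSpace E] {K : Set E}
    (hK : IsCompact K) (hne : K.Nonempty) {G : E → E} (hG : ContinuousOn G K)
    (h : ∀ ε > 0, ∃ x ∈ K, dist (G x) x < ε) : ∃ x ∈ K, G x = x := by
  obtain ⟨x, hx, hmin⟩ := hK.exists_isMinOn hne (continuous_dist.comp_continuousOn
    (hG.prodMk continuousOn_id))
  refine ⟨x, hx, ?_⟩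
  by_contra hGx
  obtain ⟨y, hy, hlt⟩ := h _ (dist_pos.2 hGx)
  exact hlt.not_ge (hmin hy)

variable {E : Type*} [NormedAddCommGroup E] [NormedSpace ℝ E]

lemma exists_mem_sum_smul_eq {ι : Type*} [Fintype ι] [Nonempty ι] {K : Set E}
    (hK : Convex ℝ K) {p : ι → E} (hp : ∀ i, p i ∈ K) {w : E → ι → ℝ} (hw : ContinuousOn w K)
    (hwK : Set.MapsTo w K (stdSimplex ℝ ι)) : ∃ x ∈ K, ∑ i, w x i • p i = x := by
  let point (l : ι → ℝ) : E := ∑ i, l i • p i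
  have hpoint : Set.MapsTo point (stdSimplex ℝ ι) K := fun l hl =>
    hK.sum_mem (fun i _ => hl.1 i) hl.2 fun i _ => hp i
  have hpoint_cont : Continuous point := by fun_prop
  obtain ⟨l, hl, hfix⟩ := exists_mem_stdSimplex_eq (f := w ∘ point)
    (hw.comp hpoint_cont.continuousOn hpoint) (hwK.comp hpoint)
  exact ⟨point l, hpoint hl, congrArg point hfix⟩

/-- **Schauder's fixed point theorem**. -/
theorem exists_eq_of_isCompact_convex {K : Set E} (hK : IsCompact K) (hconv : Convex ℝ K)
    (hne : K.Nonempty) {G : E → E} (hG : ContinuousOn G K) (hmaps : Set.MapsTo G K K) :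
    ∃ x ∈ K, G x = x := by
  refine exists_eq_of_forall_exists_dist_lt hK hne hG fun ε hε => ?_
  obtain ⟨t, ht, htfin, hcover⟩ := hK.finite_cover_balls hε
  have := htfin.fintype
  have : Nonempty t := by
    obtain ⟨x, hx⟩ := hne
    obtain ⟨p, hp, -⟩ := Set.mem_iUnion₂.1 (hcover hx)
    exact ⟨⟨p, hp⟩⟩
  obtain ⟨w, hw⟩ := PartitionOfUnity.exists_isSubordinate hK.isClosed
    (fun p : t => Metric.ball (p : E) ε) (fun _ => Metric.isOpen_ball)
    (by rwa [Set.iUnion_coe_set])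
  have sum_w : ∀ x ∈ K, ∑ p, w p x = 1 := fun x hx => by
    rw [← w.sum_eq_one hx, finsum_eq_sum_of_fintype]
  obtain ⟨x, hx, hfix⟩ := exists_mem_sum_smul_eq hconv (fun p : t => ht p.2)
    (w := fun x p => w p (G x)) (continuousOn_pi.2 fun p => (w p).continuous.comp_continuousOn hG)
    fun x hx => ⟨fun p => w.nonneg p _, sum_w _ (hmaps hx)⟩
  refine ⟨x, hx, ?_⟩
  have hball : ∑ᶠ p, w p (G x) • (p : E) ∈ Metric.ball (G x) ε :=
    (convex_ball _ _).finsum_mem (fun p => w.nonneg p _) (w.sum_eq_one (hmaps hx)) fun p hp =>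
      Metric.mem_ball_comm.1 (hw p (subset_closure hp))
  rwa [finsum_eq_sum_of_fintype, hfix, Metric.mem_ball_comm] at hball

/-- The monotone map whose pre-fixed points are the convex sets which contain `x₀` and are stable
under `G`. -/
def stableHullStep (G : E → E) (x₀ : E) : Set E →o Set E where
  toFun A := convexHull ℝ ({x₀} ∪ G '' A)
  monotone' _ _ h := convexHull_mono (Set.union_subset_union_right _ (Set.image_mono h))

/-- The smallest convex set which contains `x₀` and is stable under `G`. -/
def stableHull (G : E → E) (x₀ : E) : Set E :=
  (stableHullStep G x₀).lfp

section StableHull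

variable {G : E → E} {x₀ : E} {U : Set E}

lemma stableHullStep_subset_iff {A : Set E} (hA : Convex ℝ A) :
    stableHullStep G x₀ A ⊆ A ↔ x₀ ∈ A ∧ Set.MapsTo G A A := by
  rw [← Set.singleton_subset_iff, Set.mapsTo_iff_image_subset, ← Set.union_subset_iff]
  exact hA.convexHull_subset_iff

lemma convexHull_union_image_stableHull (G : E → E) (x₀ : E) :
    convexHull ℝ ({x₀} ∪ G '' stableHull G x₀) = stableHull G x₀ :=
  (stableHullStep G x₀).map_lfp

lemma convex_stableHull (G : E → E) (x₀ : E) : Convex ℝ (stableHull G x₀) :=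
  convexHull_union_image_stableHull G x₀ ▸ convex_convexHull ℝ _

lemma mem_and_mapsTo_stableHull (G : E → E) (x₀ : E) :
    x₀ ∈ stableHull G x₀ ∧ Set.MapsTo G (stableHull G x₀) (stableHull G x₀) :=
  (stableHullStep_subset_iff (convex_stableHull G x₀)).1
    (convexHull_union_image_stableHull G x₀).subset

lemma stableHull_subset (hU : Convex ℝ U) (hx₀ : x₀ ∈ U) (hG : Set.MapsTo G U U) :
    stableHull G x₀ ⊆ U :=
  (stableHullStep G x₀).lfp_le ((stableHullStep_subset_iff hU).2 ⟨hx₀, hG⟩)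

lemma stableHull_subset_iUnion_iterate (G : E → E) (x₀ : E) :
    stableHull G x₀ ⊆ ⋃ n : ℕ, (stableHullStep G x₀)^[n] ∅ := by
  have hmono : Monotone fun n : ℕ => (stableHullStep G x₀)^[n] ∅ :=
    (stableHullStep G x₀).monotone.monotone_iterate_of_le_map (Set.empty_subset _)
  have hconvex : ∀ n, Convex ℝ ((stableHullStep G x₀)^[n] ∅)
    | 0 => convex_empty
    | n + 1 => Function.iterate_succ_apply' (stableHullStep G x₀) n ∅ ▸ convex_convexHull ℝ _
  refine stableHull_subset (hmono.directed_le.convex_iUnion hconvex) ?_ fun x hx => ?_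
  · exact Set.mem_iUnion.2 ⟨1, subset_convexHull ℝ _ (.inl rfl)⟩
  · obtain ⟨n, hn⟩ := Set.mem_iUnion.1 hx
    refine Set.mem_iUnion.2 ⟨n + 1, ?_⟩
    rw [Function.iterate_succ_apply']
    exact subset_convexHull ℝ _ (.inr ⟨x, hn, rfl⟩)

lemma isSeparable_convexHull {s : Set E} (hs : TopologicalSpace.IsSeparable s) :
    TopologicalSpace.IsSeparable (convexHull ℝ s) :=
  (hs.span (R := ℝ)).mono (convexHull_min Submodule.subset_span (Submodule.span ℝ s).convex)

lemma isSeparable_stableHull (hG : ContinuousOn G (stableHull G x₀)) :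
    TopologicalSpace.IsSeparable (stableHull G x₀) := by
  have hsub : ∀ n, (stableHullStep G x₀)^[n] ∅ ⊆ stableHull G x₀ := fun n => by
    rw [stableHull, ← ((stableHullStep G x₀).isFixedPt_lfp).iterate n]
    exact (stableHullStep G x₀).monotone.iterate n (Set.empty_subset _)
  refine (TopologicalSpace.IsSeparable.iUnion fun n => ?_).mono
    (stableHull_subset_iUnion_iterate G x₀)
  induction n with
  | zero => exact Set.countable_empty.isSeparable
  | succ n ih =>
    rw [Function.iterate_succ_apply']
    exact isSeparable_convexHull ((Set.countable_singleton x₀).isSeparable.union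
      ((hG.mono (hsub n)).isSeparable_image ih))

end StableHull

/-- **Mönch's fixed point theorem**. -/
theorem exists_eq_of_countable_compact {U : Set E} (hUc : IsClosed U) (hU : Convex ℝ U) {x₀ : E}
    (hx₀ : x₀ ∈ U) {G : E → E} (hG : ContinuousOn G U) (hmaps : Set.MapsTo G U U)
    (hcompact : ∀ C ⊆ U, C.Countable → C ⊆ closure (convexHull ℝ ({x₀} ∪ G '' C)) →
      IsCompact (closure C)) :
    ∃ x ∈ U, G x = x := by
  have hDU : stableHull G x₀ ⊆ U := stableHull_subset hU hx₀ hmaps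
  obtain ⟨hx₀D, hGD⟩ := mem_and_mapsTo_stableHull G x₀
  obtain ⟨C, hCD, hC, hDC⟩ :=
    (isSeparable_stableHull (hG.mono hDU)).exists_countable_dense_subset
  have hGC : G '' stableHull G x₀ ⊆ closure (G '' C) := by
    rintro _ ⟨x, hx, rfl⟩
    exact ((hG x (hDU hx)).mono (hCD.trans hDU)).mem_closure_image (hDC hx)
  have hChull : C ⊆ closure (convexHull ℝ ({x₀} ∪ G '' C)) := by
    refine hCD.trans ?_
    rw [← convexHull_union_image_stableHull]
    refine convexHull_min (Set.union_subset ?_ ?_) (convex_convexHull ℝ _).closure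
    · exact (Set.subset_union_left.trans (subset_convexHull ℝ _)).trans subset_closure
    · exact hGC.trans (closure_mono (Set.subset_union_right.trans (subset_convexHull ℝ _)))
  have hclosure : closure (stableHull G x₀) = closure C :=
    (closure_minimal hDC isClosed_closure).antisymm (closure_mono hCD)
  have hcU : closure (stableHull G x₀) ⊆ U := closure_minimal hDU hUc
  obtain ⟨x, hx, hfix⟩ := exists_eq_of_isCompact_convex
    (hclosure ▸ hcompact C (hCD.trans hDU) hC hChull) (convex_stableHull G x₀).closure
    ⟨x₀, subset_closure hx₀D⟩ (hG.mono hcU) (hGD.closure_of_continuousOn (hG.mono hcU))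
  exact ⟨x, hcU hx, hfix⟩

section RadialRetraction

variable {U : Set E}

lemma gauge_le_one_iff_mem (hUc : IsClosed U) (hU : Convex ℝ U) (hU₀ : U ∈ 𝓝 0) {x : E} :
    gauge U x ≤ 1 ↔ x ∈ U := by
  rw [gauge_le_one_iff_mem_closure hU hU₀, hUc.closure_eq]

/-- The retraction onto a closed convex neighbourhood `U` of `0` which moves the points outside `U`
along the ray to `0`. -/
noncomputable def radialRetraction (U : Set E) (x : E) : E :=
  (max 1 (gauge U x))⁻¹ • x

lemma max_one_gauge_inv_mem_Ioc (U : Set E) (x : E) : (max 1 (gauge U x))⁻¹ ∈ Set.Ioc (0 : ℝ) 1 :=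
  ⟨by positivity, inv_le_one_of_one_le₀ (le_max_left _ _)⟩

lemma continuous_radialRetraction (hU : Convex ℝ U) (hU₀ : U ∈ 𝓝 0) :
    Continuous (radialRetraction U) :=
  ((continuous_const.max (continuous_gauge hU hU₀)).inv₀ fun x => by positivity).smul continuous_id

lemma radialRetraction_mem (hUc : IsClosed U) (hU : Convex ℝ U) (hU₀ : U ∈ 𝓝 0) (x : E) :
    radialRetraction U x ∈ U := by
  rw [← gauge_le_one_iff_mem hUc hU hU₀, radialRetraction,
    gauge_smul_of_nonneg (max_one_gauge_inv_mem_Ioc U x).1.le, smul_eq_mul]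
  exact inv_mul_le_one_of_le₀ (le_max_right _ _) (by positivity)

lemma radialRetraction_of_mem {x : E} (hx : x ∈ U) : radialRetraction U x = x := by
  rw [radialRetraction, max_eq_left (gauge_le_one_of_mem hx), inv_one, one_smul]

lemma radialRetraction_mem_of_convex {A : Set E} (hA : Convex ℝ A) (h₀ : (0 : E) ∈ A) {x : E}
    (hx : x ∈ A) : radialRetraction U x ∈ A :=
  hA.smul_mem_of_zero_mem h₀ hx (Set.Ioc_subset_Icc_self (max_one_gauge_inv_mem_Ioc U x))

lemma radialRetraction_notMem_interior (hU : Convex ℝ U) (hU₀ : U ∈ 𝓝 0) {x : E}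
    (hx : 1 < gauge U x) : radialRetraction U x ∉ interior U := by
  rw [← gauge_lt_one_iff_mem_interior hU hU₀, radialRetraction, max_eq_right hx.le,
    gauge_smul_of_nonneg (by positivity), smul_eq_mul, inv_mul_cancel₀ (by positivity)]
  exact lt_irrefl 1

end RadialRetraction

/-- The **Leray–Schauder–Mönch** continuation principle. -/
theorem exists_eq_of_countable_compact_of_leraySchauder {U : Set E} (hUc : IsClosed U)
    (hU : Convex ℝ U) (hU₀ : U ∈ 𝓝 0) {N : E → E} (hN : ContinuousOn N U)
    (hbdry : ∀ u ∈ U, ∀ r : ℝ, 0 < r → r < 1 → u = r • N u → u ∈ interior U)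
    (hcompact : ∀ C ⊆ U, C.Countable → C ⊆ closure (convexHull ℝ ({0} ∪ N '' C)) →
      IsCompact (closure C)) :
    ∃ u ∈ U, N u = u := by
  obtain ⟨u, hu, hfix⟩ := exists_eq_of_countable_compact hUc hU (mem_of_mem_nhds hU₀)
    (G := fun u => radialRetraction U (N u))
    ((continuous_radialRetraction hU hU₀).comp_continuousOn hN)
    (fun u _ => radialRetraction_mem hUc hU hU₀ (N u)) fun C hCU hC hC_hull => by
      refine hcompact C hCU hC (hC_hull.trans (closure_mono (convexHull_min ?_ ?_)))
      · refine Set.union_subset (Set.subset_union_left.trans (subset_convexHull ℝ _)) ?_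
        rintro _ ⟨x, hx, rfl⟩
        exact radialRetraction_mem_of_convex (convex_convexHull ℝ _)
          (subset_convexHull ℝ _ (.inl rfl)) (subset_convexHull ℝ _ (.inr ⟨x, hx, rfl⟩))
      · exact convex_convexHull ℝ _
  have hNu : N u ∈ U := by
    by_contra hNu
    have hgauge : 1 < gauge U (N u) := not_le.1 fun h => hNu ((gauge_le_one_iff_mem hUc hU hU₀).1 h)
    refine radialRetraction_notMem_interior hU hU₀ hgauge ?_
    rw [hfix]
    exact hbdry u hu (max 1 (gauge U (N u)))⁻¹ (max_one_gauge_inv_mem_Ioc U (N u)).1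
      (inv_lt_one_of_one_lt₀ (lt_max_of_lt_right hgauge)) hfix.symm
  exact ⟨u, hu, (radialRetraction_of_mem hNu).symm.trans hfix⟩

end FixedPoint

section FunctionSpace

lemma continuousOn_of_norm_sub_le {E F : Type*} [SeminormedAddCommGroup E]
    [SeminormedAddCommGroup F] {N : E → F} {U : Set E} {d : E → E → ℝ}
    (hNd : ∀ u ∈ U, ∀ v ∈ U, ‖N v - N u‖ ≤ d v u)
    (hd : ∀ (v : ℕ → E) (u : E), (∀ n, v n ∈ U) → u ∈ U →
      Tendsto (fun n => ‖v n - u‖) atTop (𝓝 0) → Tendsto (fun n => d (v n) u) atTop (𝓝 0)) :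
    ContinuousOn N U := by
  rw [continuousOn_iff_continuous_domRestrict, continuous_iff_seqContinuous]
  intro v u hvu
  have hvu' := tendsto_iff_norm_sub_tendsto_zero.1 ((continuous_subtype_val.tendsto u).comp hvu)
  exact tendsto_iff_norm_sub_tendsto_zero.2 (squeeze_zero (fun n => norm_nonneg _)
    (fun n => hNd u u.2 (v n) (v n).2) (hd _ u (fun n => (v n).2) u.2 hvu'))

variable {K X : Type*} [TopologicalSpace K] [CompactSpace K] [NormedAddCommGroup X] {a : ℝ}
  {R : ℝ → ℝ}

lemma isOpen_forall_norm_lt {r : K → ℝ} (hr : Continuous r) :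
    IsOpen {u : C(K, X) | ∀ t, ‖u t‖ < r t} := by
  refine isOpen_iff_eventually.2 fun u hu => ?_
  have hlocal : ∀ t ∈ Set.univ, ∀ᶠ z : C(K, X) × K in 𝓝 (u, t), ‖z.1 z.2‖ < r z.2 := fun t _ =>
    continuous_eval.norm.continuousAt.eventually_lt (hr.comp continuous_snd).continuousAt (hu t)
  exact (isCompact_univ.eventually_forall_of_forall_eventually hlocal).mono
    fun v hv t => hv t (Set.mem_univ t)

lemma isClosed_ubarSet (a : ℝ) (R : ℝ → ℝ) : IsClosed (UbarSet (X := X) a R) := by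
  rw [UbarSet, Set.ofPred_forall]
  exact isClosed_iInter fun t => isClosed_le (continuous_eval_const t).norm continuous_const

lemma convex_ubarSet [NormedSpace ℝ X] (a : ℝ) (R : ℝ → ℝ) : Convex ℝ (UbarSet (X := X) a R) :=
  fun u hu v hv b c hb hc hbc t => by
    simpa using convex_closedBall (0 : X) (R t) (by simpa using hu t) (by simpa using hv t)
      hb hc hbc

lemma mem_interior_ubarSet (hR : ContinuousOn R (Set.Icc 0 a)) {u : C(Set.Icc (0 : ℝ) a, X)}
    (hu : ∀ t, ‖u t‖ < R t) : u ∈ interior (UbarSet a R) :=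
  interior_maximal (fun _ hv t => (hv t).le)
    (isOpen_forall_norm_lt (continuousOn_iff_continuous_domRestrict.1 hR)) hu

end FunctionSpace

section Integral

variable {X Y : Type*} [NormedAddCommGroup X] [NormedSpace ℝ X] [NormedAddCommGroup Y]
  [NormedSpace ℝ Y] {M : ℝ}

lemma norm_integral_apply_sub_le {α : Type*} [MeasurableSpace α] {μ : Measure α}
    {A : α → X →L[ℝ] Y} (hA : AEStronglyMeasurable A μ) (hAM : ∀ᵐ s ∂μ, ‖A s‖ ≤ M)
    {φ ψ : α → X} (hφ : Integrable φ μ) (hψ : Integrable ψ μ) :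
    ‖∫ s, A s (φ s) ∂μ - ∫ s, A s (ψ s) ∂μ‖ ≤ M * ∫ s, ‖φ s - ψ s‖ ∂μ := by
  have integrable_apply : ∀ {χ : α → X}, Integrable χ μ → Integrable (fun s => A s (χ s)) μ :=
    (ContinuousLinearMap.id ℝ (X →L[ℝ] Y)).integrable_of_bilin_of_bdd_left M hA hAM
  rw [← integral_sub (integrable_apply hφ) (integrable_apply hψ), ← integral_const_mul]
  refine norm_integral_le_of_norm_le ((hφ.sub hψ).norm.const_mul M) (hAM.mono fun s hs => ?_)
  rw [← map_sub]
  exact (A s).le_of_opNorm_le hs _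

lemma norm_intervalIntegral_apply_sub_le {b c t : ℝ} (ht : t ∈ Set.Icc b c) (hM : 0 ≤ M)
    {A : ℝ → X →L[ℝ] Y} (hA : AEStronglyMeasurable A (volume.restrict (Set.Ioc b t)))
    (hAM : ∀ s ∈ Set.Ioc b t, ‖A s‖ ≤ M) {φ ψ : ℝ → X} (hφ : IntegrableOn φ (Set.Icc b c))
    (hψ : IntegrableOn ψ (Set.Icc b c)) :
    ‖(∫ s in b..t, A s (φ s)) - ∫ s in b..t, A s (ψ s)‖ ≤
      M * ∫ s in Set.Icc b c, ‖φ s - ψ s‖ := by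
  have hsub : Set.Ioc b t ⊆ Set.Icc b c :=
    Set.Ioc_subset_Icc_self.trans (Set.Icc_subset_Icc_right ht.2)
  rw [intervalIntegral.integral_of_le ht.1, intervalIntegral.integral_of_le ht.1]
  refine (norm_integral_apply_sub_le hA (ae_restrict_of_forall_mem measurableSet_Ioc hAM)
    (hφ.mono_set hsub) (hψ.mono_set hsub)).trans (mul_le_mul_of_nonneg_left ?_ hM)
  exact setIntegral_mono_set (hφ.sub hψ).norm (.of_forall fun s => norm_nonneg _) hsub.eventuallyLE

lemma aestronglyMeasurable_of_continuousOn_triangle {Y : Type*} [TopologicalSpace Y]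
    [TopologicalSpace.PseudoMetrizableSpace Y] {a : ℝ} {f : ℝ → ℝ → Y}
    (hf : ContinuousOn (fun p : ℝ × ℝ => f p.1 p.2) {p | 0 ≤ p.2 ∧ p.2 ≤ p.1 ∧ p.1 ≤ a}) {t : ℝ}
    (ht : t ≤ a) : AEStronglyMeasurable (f t) (volume.restrict (Set.Ioc 0 t)) :=
  (hf.comp (Continuous.prodMk_right t).continuousOn
    fun _ hs => ⟨hs.1.le, hs.2, ht⟩).aestronglyMeasurable measurableSet_Ioc

end Integral

section NonlocalProblem

variable {X : Type*} [NormedAddCommGroup X] [NormedSpace ℝ X] {a M : ℝ}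
  {T : ℝ → ℝ → X →L[ℝ] X} {L : C(Set.Icc (0 : ℝ) a, X) →L[ℝ] X}

/-- `w` is the function `t ↦ T(t,0)(L v) + v(t)`, where `v(t) = ∫₀ᵗ T(t,s)φ(s) ds` is the solution
with zero initial value of the linear problem with right-hand side `φ`. For `L = B ∘ F` this is the
mild solution of the linear problem with the nonlocal condition `w(0) = F(w)`. -/
def IsNonlocalMildSolution (T : ℝ → ℝ → X →L[ℝ] X) (L : C(Set.Icc (0 : ℝ) a, X) →L[ℝ] X)
    (φ : ℝ → X) (w : C(Set.Icc (0 : ℝ) a, X)) : Prop :=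
  ∃ v : C(Set.Icc (0 : ℝ) a, X),
    (∀ t : Set.Icc (0 : ℝ) a, v t = ∫ s in (0 : ℝ)..t, T t s (φ s)) ∧
      ∀ t : Set.Icc (0 : ℝ) a, w t = T t 0 (L v) + ∫ s in (0 : ℝ)..t, T t s (φ s)

lemma IsNonlocalMildSolution.norm_sub_le
    (hTmeas : ∀ t ∈ Set.Icc 0 a, AEStronglyMeasurable (T t) (volume.restrict (Set.Ioc 0 t)))
    (hM : 0 ≤ M) (hTM : ∀ t s : ℝ, 0 ≤ s → s ≤ t → t ≤ a → ‖T t s‖ ≤ M)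
    {φ ψ : ℝ → X} (hφ : IntegrableOn φ (Set.Icc 0 a)) (hψ : IntegrableOn ψ (Set.Icc 0 a))
    {w z : C(Set.Icc (0 : ℝ) a, X)} (hw : IsNonlocalMildSolution T L φ w)
    (hz : IsNonlocalMildSolution T L ψ z) :
    ‖w - z‖ ≤ (M * ‖L‖ * M + M) * ∫ s in Set.Icc 0 a, ‖φ s - ψ s‖ := by
  obtain ⟨v, hv, hw⟩ := hw
  obtain ⟨y, hy, hz⟩ := hz
  set J := ∫ s in Set.Icc 0 a, ‖φ s - ψ s‖
  have : 0 ≤ J := integral_nonneg fun s => norm_nonneg _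
  have hvy : ‖v - y‖ ≤ M * J := (ContinuousMap.norm_le _ (by positivity)).2 fun t => by
    rw [ContinuousMap.sub_apply, hv, hy]
    exact norm_intervalIntegral_apply_sub_le t.2 hM (hTmeas t t.2)
      (fun s hs => hTM t s hs.1.le hs.2 t.2.2) hφ hψ
  refine (ContinuousMap.norm_le _ (by positivity)).2 fun t => ?_
  have hT : ‖T t 0‖ ≤ M := hTM t 0 le_rfl t.2.1 t.2.2
  calc ‖(w - z) t‖ = ‖T t 0 (L (v - y)) + (v - y) t‖ := by
        rw [ContinuousMap.sub_apply, hw, hz, ← hv, ← hy, add_sub_add_comm, ← map_sub, ← map_sub,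
          ContinuousMap.sub_apply]
    _ ≤ M * (‖L‖ * ‖v - y‖) + ‖v - y‖ :=
        norm_add_le_of_le ((T t 0).le_of_opNorm_le_of_le hT (L.le_opNorm _))
          ((v - y).norm_coe_le_norm t)
    _ ≤ M * (‖L‖ * (M * J)) + M * J := by gcongr
    _ = (M * ‖L‖ * M + M) * J := by ring

theorem stmt_1_general [CompleteSpace X] (T : ℝ → ℝ → X →L[ℝ] X)
    (hTmeas : ∀ t ∈ Set.Icc 0 a, AEStronglyMeasurable (T t) (volume.restrict (Set.Ioc 0 t)))
    (hM : 0 ≤ M) (hTM : ∀ t s : ℝ, 0 ≤ s → s ≤ t → t ≤ a → ‖T t s‖ ≤ M)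
    (R : ℝ → ℝ) (hRc : ContinuousOn R (Set.Icc 0 a)) (hRpos : ∀ t ∈ Set.Icc 0 a, 0 < R t)
    (Φ : C(Set.Icc (0 : ℝ) a, X) → ℝ → X)
    (hΦint : ∀ u ∈ UbarSet a R, IntegrableOn (Φ u) (Set.Icc 0 a))
    (hΦcont : ∀ (v : ℕ → C(Set.Icc (0 : ℝ) a, X)) (u : C(Set.Icc (0 : ℝ) a, X)),
      (∀ n, v n ∈ UbarSet a R) → u ∈ UbarSet a R → Tendsto (fun n => ‖v n - u‖) atTop (𝓝 0) →
      Tendsto (fun n => ∫ s in Set.Icc 0 a, ‖Φ (v n) s - Φ u s‖) atTop (𝓝 0))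
    (L : C(Set.Icc (0 : ℝ) a, X) →L[ℝ] X) (N : C(Set.Icc (0 : ℝ) a, X) → C(Set.Icc (0 : ℝ) a, X))
    (hN : ∀ u ∈ UbarSet a R, IsNonlocalMildSolution T L (Φ u) (N u))
    (hbdry : ∀ u ∈ UbarSet a R, ∀ r : ℝ, 0 < r → r < 1 → (∀ t, u t = r • N u t) →
      ∀ t, ‖u t‖ < R t)
    (hcompact : ∀ C ⊆ UbarSet a R, C.Countable → C ⊆ closure (convexHull ℝ ({0} ∪ N '' C)) →
      IsCompact (closure C)) :
    ∃ u ∈ UbarSet a R, N u = u := by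
  have hN_cont : ContinuousOn N (UbarSet a R) :=
    continuousOn_of_norm_sub_le
      (fun u hu v hv => (hN v hv).norm_sub_le hTmeas hM hTM (hΦint v hv) (hΦint u hu) (hN u hu))
      fun v u hv hu hvu => by simpa using (hΦcont v u hv hu hvu).const_mul (M * ‖L‖ * M + M)
  have hU₀ : UbarSet a R ∈ 𝓝 (0 : C(Set.Icc (0 : ℝ) a, X)) :=
    mem_interior_iff_mem_nhds.1 (mem_interior_ubarSet hRc fun t => by simpa using hRpos t t.2)
  have hinterior : ∀ u ∈ UbarSet a R, ∀ r : ℝ, 0 < r → r < 1 → u = r • N u →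
      u ∈ interior (UbarSet a R) := fun u hu r hr₀ hr₁ hur => by
    refine mem_interior_ubarSet hRc (hbdry u hu r hr₀ hr₁ fun t => ?_)
    rw [← ContinuousMap.smul_apply, ← hur]
  exact exists_eq_of_countable_compact_of_leraySchauder (E := C(Set.Icc (0 : ℝ) a, X))
    (isClosed_ubarSet a R) (convex_ubarSet a R) hU₀ hN_cont hinterior hcompact

end NonlocalProblem

/-- **Existence principle (Theorem 2.1).** Under (h1), (h2), (h3⁰) and (h4⁰) the
operator `N` has a fixed point in `Ū`, i.e. the nonlocal problem has a mild solution. -/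
theorem stmt_1
    {X : Type*} [NormedAddCommGroup X] [NormedSpace ℝ X] [CompleteSpace X]
    -- the interval [0,a]
    {a : ℝ} (ha : 0 < a)
    -- the evolution operator T on Δ, continuous in operator norm, with bound M
    (T : ℝ → ℝ → X →L[ℝ] X)
    (hTcont : ContinuousOn (fun p : ℝ × ℝ => T p.1 p.2)
      {p : ℝ × ℝ | 0 ≤ p.2 ∧ p.2 ≤ p.1 ∧ p.1 ≤ a})
    (hTid : ∀ s ∈ Set.Icc (0:ℝ) a, T s s = ContinuousLinearMap.id ℝ X)
    (hTsemi : ∀ s r t : ℝ, 0 ≤ s → s ≤ r → r ≤ t → t ≤ a → (T t r).comp (T r s) = T t s)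
    {M : ℝ} (hM : 0 < M)
    (hTM : ∀ t s : ℝ, 0 ≤ s → s ≤ t → t ≤ a → ‖T t s‖ ≤ M)
    -- the radius function R
    (R : ℝ → ℝ) (hRc : ContinuousOn R (Set.Icc 0 a))
    (hRpos : ∀ t ∈ Set.Icc (0:ℝ) a, 0 < R t)
    -- (h1): Φ maps Ū into Bochner-integrable functions, continuously
    (Φ : C(Set.Icc (0:ℝ) a, X) → ℝ → X)
    (hΦint : ∀ u ∈ UbarSet (X := X) a R, IntegrableOn (Φ u) (Set.Icc 0 a))
    (hΦcont : ∀ (v : ℕ → C(Set.Icc (0:ℝ) a, X)) (u : C(Set.Icc (0:ℝ) a, X)),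
      (∀ n, v n ∈ UbarSet (X := X) a R) → u ∈ UbarSet (X := X) a R →
      Filter.Tendsto (fun n => ‖v n - u‖) Filter.atTop (nhds 0) →
      Filter.Tendsto (fun n => ∫ s in Set.Icc (0:ℝ) a, ‖Φ (v n) s - Φ u s‖)
        Filter.atTop (nhds 0))
    -- (h2): F is linear continuous and x ↦ x - F(T(·,0)x) has a (bounded linear) inverse B
    (F : C(Set.Icc (0:ℝ) a, X) →L[ℝ] X) (B : X →L[ℝ] X)
    (W : X → C(Set.Icc (0:ℝ) a, X))
    (hW : ∀ (x : X) (t : Set.Icc (0:ℝ) a), W x t = T (t : ℝ) 0 x)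
    (hBleft : ∀ x : X, B (x - F (W x)) = x)
    (hBright : ∀ x : X, B x - F (W (B x)) = x)
    -- the operator N of the problem
    (N : C(Set.Icc (0:ℝ) a, X) → C(Set.Icc (0:ℝ) a, X))
    (hN : ∀ u ∈ UbarSet (X := X) a R, ∃ v : C(Set.Icc (0:ℝ) a, X),
      (∀ t : Set.Icc (0:ℝ) a, v t = ∫ s in (0:ℝ)..(t : ℝ), T (t : ℝ) s (Φ u s)) ∧
      ∀ t : Set.Icc (0:ℝ) a,
        N u t = T (t : ℝ) 0 (B (F v)) + ∫ s in (0:ℝ)..(t : ℝ), T (t : ℝ) s (Φ u s))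
    -- (h3⁰)
    (h30 : ∀ u ∈ UbarSet (X := X) a R, ∀ lam : ℝ, 0 < lam → lam < 1 →
      (∀ t : Set.Icc (0:ℝ) a, u t = lam • N u t) →
      ∀ t : Set.Icc (0:ℝ) a, ‖u t‖ < R t)
    -- (h4⁰)
    (h40 : ∀ C : Set C(Set.Icc (0:ℝ) a, X), C ⊆ UbarSet (X := X) a R → C.Countable →
      C ⊆ closure (convexHull ℝ ({0} ∪ N '' C)) → IsCompact (closure C)) :
    ∃ u ∈ UbarSet (X := X) a R, N u = u :=
  stmt_1_general T (fun _ ht => aestronglyMeasurable_of_continuousOn_triangle hTcont ht.2) hM.le hTM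
    R hRc hRpos Φ hΦint hΦcont (B.comp F) N hN h30 h40
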